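/- Let 1/2 < H < 1 and θ > 0, and set α_H = H(2H-1). Define r(t) = e^{-θt} [ θ^{-2H} H Γ(2H) + α_H ∫₀^t ∫_v^∞ e^{-θx + 2θv} x^{2H-2} dx dv ] for t ≥ 0. Then, as t → 0⁺, r(t) = θ^{-2H} H Γ(2H) − (1/2) t^{2H} + o(t^{2H}); that is, the function t ↦ r(t) − θ^{-2H} H Γ(2H) + (1/2) t^{2H} is o(t^{2H}) as t → 0⁺. -/

import Mathlib

open MeasureTheory Real Set Filter

/-!
Integration by parts lowers the singularity of the inner integral: writing
`U(s, v) = ∫_v^∞ e^{-θx} x^{s-1} dx`, one has `(2H-1) U(2H-1, v) = θ U(2H, v) - e^{-θv} v^{2H-1}`,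
and `H U(2H, 0) = θ^{-2H} H Γ(2H)` is the variance `r(0)`. Since
`H ∫₀ᵗ θ e^{θv} U(2H, 0) dv = r(0) (e^{θt} - 1)` and `H ∫₀ᵗ v^{2H-1} dv = t^{2H} / 2`, this gives
`e^{θt} (r(t) - r(0)) = H ∫₀ᵗ ρ - t^{2H} / 2`, where
`ρ(v) = θ (e^{2θv} U(2H, v) - e^{θv} U(2H, 0)) - (e^{θv} - 1) v^{2H-1}`.
The first difference is `O(v + v^{2H})`, so `ρ(v) = o(v^{2H-1})` and `∫₀ᵗ ρ = o(t^{2H})`.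
-/

open Asymptotics Topology

section PowerAsymptotics

variable {E : Type*} [NormedAddCommGroup E] [NormedSpace ℝ E] {f : ℝ → E} {a b c : ℝ}

theorem isLittleO_rpow_rpow_nhdsGT_zero (hab : a < b) :
    (fun x : ℝ => x ^ b) =o[𝓝[>] 0] fun x => x ^ a := by
  have tendsto_gap : Tendsto (fun x : ℝ => x ^ (b - a)) (𝓝[>] 0) (𝓝 0) := by
    have gap_pos : 0 < b - a := sub_pos.2 hab
    have := (continuousAt_rpow_const 0 (b - a) (Or.inr gap_pos.le)).tendsto
    rw [zero_rpow gap_pos.ne'] at this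
    exact this.mono_left nhdsWithin_le_nhds
  refine isLittleO_iff_exists_eq_mul.2 ⟨_, tendsto_gap, ?_⟩
  filter_upwards [self_mem_nhdsWithin] with x hx
  rw [Pi.mul_apply, ← rpow_add hx, sub_add_cancel]

theorem isBigOWith_intervalIntegral_rpow (ha : -1 < a)
    (hf : IsBigOWith c (𝓝[>] 0) f fun x => x ^ a) :
    IsBigOWith (c / (a + 1)) (𝓝[>] 0) (fun t => ∫ x in (0 : ℝ)..t, f x) fun t => t ^ (a + 1) := by
  obtain ⟨δ, hδ, bound⟩ := mem_nhdsGT_iff_exists_Ioc_subset.1 hf.bound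
  refine IsBigOWith.of_bound ?_
  filter_upwards [Ioc_mem_nhdsGT hδ] with t ⟨ht0, htδ⟩
  have bound_on : ∀ x ∈ Ioc 0 t, ‖f x‖ ≤ c * x ^ a := fun x hx => by
    have hx_bound : ‖f x‖ ≤ c * ‖x ^ a‖ := bound ⟨hx.1, hx.2.trans htδ⟩
    rwa [norm_of_nonneg (rpow_nonneg hx.1.le a)] at hx_bound
  calc ‖∫ x in (0 : ℝ)..t, f x‖
      ≤ ∫ x in (0 : ℝ)..t, c * x ^ a :=
        intervalIntegral.norm_integral_le_of_norm_le ht0.le (ae_of_all _ bound_on)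
          ((intervalIntegral.intervalIntegrable_rpow' ha).const_mul c)
    _ = c / (a + 1) * ‖t ^ (a + 1)‖ := by
        rw [intervalIntegral.integral_const_mul, integral_rpow (Or.inl ha),
          zero_rpow (by linarith), norm_of_nonneg (rpow_nonneg ht0.le _)]
        ring

theorem isBigO_intervalIntegral_rpow (ha : -1 < a) (hf : f =O[𝓝[>] 0] fun x => x ^ a) :
    (fun t => ∫ x in (0 : ℝ)..t, f x) =O[𝓝[>] 0] fun t => t ^ (a + 1) :=
  let ⟨_, hc⟩ := hf.isBigOWith
  (isBigOWith_intervalIntegral_rpow ha hc).isBigO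

theorem isLittleO_intervalIntegral_rpow (ha : -1 < a) (hf : f =o[𝓝[>] 0] fun x => x ^ a) :
    (fun t => ∫ x in (0 : ℝ)..t, f x) =o[𝓝[>] 0] fun t => t ^ (a + 1) := by
  have ha' : 0 < a + 1 := by linarith
  refine IsLittleO.of_isBigOWith fun ε hε => ?_
  simpa only [mul_div_cancel_right₀ ε ha'.ne'] using
    isBigOWith_intervalIntegral_rpow ha (hf.forall_isBigOWith (mul_pos hε ha'))

theorem isBigO_exp_mul_one (c : ℝ) : (fun x => exp (c * x)) =O[𝓝[>] 0] fun _ => (1 : ℝ) :=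
  ((by fun_prop : Continuous fun x => exp (c * x)).tendsto 0).mono_left nhdsWithin_le_nhds
    |>.isBigO_one ℝ

theorem isLittleO_exp_mul_sub_one_rpow (c : ℝ) (ha : a < 1) :
    (fun x => exp (c * x) - 1) =o[𝓝[>] 0] fun x => x ^ a := by
  have linear_bound : (fun x => exp (c * x) - 1) =O[𝓝[>] 0] fun x => x := by
    have := (by fun_prop : DifferentiableAt ℝ (fun x => exp (c * x)) 0).isBigO_sub
    simpa using this.mono nhdsWithin_le_nhds
  have id_rpow : (fun x : ℝ => x) =o[𝓝[>] 0] fun x => x ^ a := by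
    simpa only [rpow_one] using isLittleO_rpow_rpow_nhdsGT_zero ha
  exact linear_bound.trans_isLittleO id_rpow

theorem isLittleO_exp_mul_sub_one_mul (c : ℝ) (g : ℝ → ℝ) :
    (fun x => (exp (c * x) - 1) * g x) =o[𝓝[>] 0] g := by
  have sub_one : (fun x => exp (c * x) - 1) =o[𝓝[>] 0] fun _ => (1 : ℝ) := by
    simpa only [rpow_zero] using isLittleO_exp_mul_sub_one_rpow c one_pos
  simpa only [one_mul] using sub_one.mul_isBigO (isBigO_refl g _)

theorem isLittleO_exp_mul_mul (c : ℝ) {g h : ℝ → ℝ} (hg : g =o[𝓝[>] 0] h) :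
    (fun x => exp (c * x) * g x) =o[𝓝[>] 0] h := by
  simpa only [one_mul] using (isBigO_exp_mul_one c).mul_isLittleO hg

end PowerAsymptotics

/-- The upper incomplete Gamma integral with rate `θ`, equal to `θ ^ (-s) * Γ(s, θ v)` in the
usual notation. It converges for `v > 0` and every `s`, and for `v = 0` when `s > 0`. -/
noncomputable def upperGamma (θ s v : ℝ) : ℝ :=
  ∫ x in Ioi v, exp (-θ * x) * x ^ (s - 1)

section UpperGamma

variable {θ s v : ℝ}

theorem integrableOn_exp_mul_rpow_Ioi (hθ : 0 < θ) (hv : 0 < v) (a : ℝ) :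
    IntegrableOn (fun x => exp (-θ * x) * x ^ a) (Ioi v) := by
  refine integrable_of_isBigO_exp_neg (half_pos hθ) ?_ ?_
  · exact (by fun_prop : Continuous fun x => exp (-θ * x)).continuousOn.mul <|
      continuousOn_id.rpow_const fun x hx => Or.inl (hv.trans_le hx).ne'
  · have := (isBigO_refl (fun x => exp (-θ * x)) atTop).mul
      (isLittleO_rpow_exp_pos_mul_atTop a (half_pos hθ)).isBigO
    refine this.congr_right fun x => ?_
    rw [← exp_add]
    ring_nf

theorem integrableOn_exp_mul_rpow_Ioi_zero (hθ : 0 < θ) (hs : 0 < s) :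
    IntegrableOn (fun x => exp (-θ * x) * x ^ (s - 1)) (Ioi 0) := by
  simpa only [rpow_one, mul_comm] using
    integrableOn_rpow_mul_exp_neg_mul_rpow (by linarith) one_pos hθ

theorem upperGamma_add_one (hθ : 0 < θ) (hv : 0 < v) :
    θ * upperGamma θ (s + 1) v = s * upperGamma θ s v + exp (-θ * v) * v ^ s := by
  have hderiv : ∀ x ∈ Ici v, HasDerivAt (fun x => exp (-θ * x) * x ^ s)
      (s * (exp (-θ * x) * x ^ (s - 1)) - θ * (exp (-θ * x) * x ^ s)) x := fun x hx => by
    have hexp : HasDerivAt (fun x => exp (-θ * x)) (exp (-θ * x) * -θ) x := by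
      simpa using ((hasDerivAt_id x).const_mul (-θ)).exp
    convert! hexp.mul (hasDerivAt_rpow_const (p := s) (Or.inl (hv.trans_le hx).ne')) using 1
    ring
  have vanishes : Tendsto (fun x => exp (-θ * x) * x ^ s) atTop (𝓝 0) := by
    simpa only [mul_comm] using tendsto_rpow_mul_exp_neg_mul_atTop_nhds_zero s θ hθ
  have int_low := (integrableOn_exp_mul_rpow_Ioi hθ hv (s - 1)).const_mul s
  have int_high := (integrableOn_exp_mul_rpow_Ioi hθ hv s).const_mul θ
  have parts := integral_Ioi_of_hasDerivAt_of_tendsto' hderiv (int_low.sub int_high) vanishes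
  rw [integral_sub int_low int_high, integral_const_mul, integral_const_mul] at parts
  rw [upperGamma, upperGamma, add_sub_cancel_right]
  linarith

theorem upperGamma_zero (hθ : 0 < θ) (hs : 0 < s) :
    upperGamma θ s 0 = θ ^ (-s) * Gamma s := by
  have := integral_rpow_mul_exp_neg_mul_Ioi hs hθ
  rw [one_div, inv_rpow hθ.le, ← rpow_neg hθ.le] at this
  simpa only [upperGamma, neg_mul, mul_comm (exp _)] using this

theorem upperGamma_zero_sub (hθ : 0 < θ) (hs : 0 < s) (hv : 0 ≤ v) :
    upperGamma θ s 0 - upperGamma θ s v = ∫ x in (0 : ℝ)..v, exp (-θ * x) * x ^ (s - 1) :=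
  intervalIntegral.integral_Ioi_sub_Ioi (integrableOn_exp_mul_rpow_Ioi_zero hθ hs) hv

theorem continuousOn_upperGamma (hθ : 0 < θ) (hs : 0 < s) :
    ContinuousOn (upperGamma θ s) (Ici 0) :=
  (integrableOn_exp_mul_rpow_Ioi_zero hθ hs).continuousOn_Ici_primitive_Ioi

theorem isBigO_upperGamma_zero_sub (hθ : 0 < θ) (hs : 0 < s) :
    (fun v => upperGamma θ s 0 - upperGamma θ s v) =O[𝓝[>] 0] fun v => v ^ s := by
  have integrand : (fun x => exp (-θ * x) * x ^ (s - 1)) =O[𝓝[>] 0] fun x => x ^ (s - 1) := by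
    simpa only [one_mul] using (isBigO_exp_mul_one (-θ)).mul (isBigO_refl _ _)
  have primitive := isBigO_intervalIntegral_rpow (by linarith) integrand
  rw [sub_add_cancel] at primitive
  refine primitive.congr' ?_ EventuallyEq.rfl
  filter_upwards [self_mem_nhdsWithin] with v hv
  exact (upperGamma_zero_sub hθ hs (le_of_lt hv)).symm

end UpperGamma

/-- The covariance `r(t) = Cov(Y₀, Y_t)`, `t ≥ 0`, of the stationary fractional Ornstein–Uhlenbeck
process with Hurst index `H`, mean-reversion rate `θ` and `σ = 1`. For `H ≤ 1/2` the inner integral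
diverges at `v = 0`, but as a function of `v` it is still integrable on `(0, t)` when `H > 0`. -/
noncomputable def fouCov (H θ t : ℝ) : ℝ :=
  exp (-θ * t) * (θ ^ (-(2 * H)) * H * Gamma (2 * H) +
    H * (2 * H - 1) * ∫ v in (0 : ℝ)..t, ∫ x in Ioi v,
      exp (-θ * x + 2 * θ * v) * x ^ (2 * H - 2))

/-- The function `ρ` for which `e^{θt} (r(t) - r(0)) = H ∫₀ᵗ ρ - t^{2H} / 2`, where `r` is
`fouCov H θ`; it collects the part of the derivative of the left side of lower order than
`v^{2H-1}`. -/
noncomputable def fouRemainder (H θ v : ℝ) : ℝ :=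
  θ * (exp (2 * θ * v) * upperGamma θ (2 * H) v - exp (θ * v) * upperGamma θ (2 * H) 0)
    - (exp (θ * v) - 1) * v ^ (2 * H - 1)

section FractionalOrnsteinUhlenbeck

variable {H θ v t : ℝ}

theorem intervalIntegrable_fouRemainder (hH : 0 < H) (hθ : 0 < θ) (ht : 0 ≤ t) :
    IntervalIntegrable (fouRemainder H θ) volume 0 t := by
  have hU : ContinuousOn (upperGamma θ (2 * H)) (uIcc 0 t) :=
    (continuousOn_upperGamma hθ (by positivity)).mono (uIcc_of_le ht ▸ Icc_subset_Ici_self)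
  exact (ContinuousOn.intervalIntegrable (by fun_prop)).sub <|
    (intervalIntegral.intervalIntegrable_rpow' (by linarith)).continuousOn_mul (by fun_prop)

theorem isLittleO_fouRemainder (hH0 : 0 < H) (hH1 : H < 1) (hθ : 0 < θ) :
    fouRemainder H θ =o[𝓝[>] 0] fun v => v ^ (2 * H - 1) := by
  have gamma_sub : (fun v => upperGamma θ (2 * H) 0 - upperGamma θ (2 * H) v)
      =o[𝓝[>] 0] fun v => v ^ (2 * H - 1) :=
    (isBigO_upperGamma_zero_sub hθ (by positivity)).trans_isLittleO <|
      isLittleO_rpow_rpow_nhdsGT_zero (by linarith)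
  have exp_part := (isLittleO_exp_mul_mul θ
    (isLittleO_exp_mul_sub_one_rpow θ (by linarith : 2 * H - 1 < 1))).const_mul_left
      (θ * upperGamma θ (2 * H) 0)
  have gamma_part := (isLittleO_exp_mul_mul (2 * θ) gamma_sub).const_mul_left θ
  have rpow_part := isLittleO_exp_mul_sub_one_mul θ fun v => v ^ (2 * H - 1)
  refine ((exp_part.sub gamma_part).sub rpow_part).congr_left fun v => ?_
  have exp_sq : exp (2 * θ * v) = exp (θ * v) * exp (θ * v) := by rw [← exp_add]; ring_nf
  rw [fouRemainder, exp_sq]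
  ring

theorem fouCov_integrand_eq (hθ : 0 < θ) (hv : 0 < v) :
    H * (2 * H - 1) * ∫ x in Ioi v, exp (-θ * x + 2 * θ * v) * x ^ (2 * H - 2) =
      H * (fouRemainder H θ v + upperGamma θ (2 * H) 0 * (θ * exp (θ * v)) - v ^ (2 * H - 1)) := by
  have inner : ∫ x in Ioi v, exp (-θ * x + 2 * θ * v) * x ^ (2 * H - 2) =
      exp (2 * θ * v) * upperGamma θ (2 * H - 1) v := by
    rw [upperGamma, ← integral_const_mul]
    refine integral_congr_ae (ae_of_all _ fun x => ?_)
    simp only [exp_add]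
    ring_nf
  have parts := upperGamma_add_one (s := 2 * H - 1) hθ hv
  rw [sub_add_cancel] at parts
  have exp_cancel : exp (2 * θ * v) * exp (-θ * v) = exp (θ * v) := by rw [← exp_add]; ring_nf
  rw [inner, fouRemainder]
  linear_combination (-H * exp (2 * θ * v)) * parts - H * v ^ (2 * H - 1) * exp_cancel

theorem fouCov_double_integral_eq (hH : 0 < H) (hθ : 0 < θ) (ht : 0 ≤ t) :
    H * (2 * H - 1) * ∫ v in (0 : ℝ)..t, ∫ x in Ioi v,
        exp (-θ * x + 2 * θ * v) * x ^ (2 * H - 2) =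
      H * ((∫ v in (0 : ℝ)..t, fouRemainder H θ v)
        + upperGamma θ (2 * H) 0 * (exp (θ * t) - 1) - t ^ (2 * H) / (2 * H)) := by
  have integral_exp : ∫ v in (0 : ℝ)..t, θ * exp (θ * v) = exp (θ * t) - 1 := by
    simp [intervalIntegral.mul_integral_comp_mul_left]
  have integral_pow : ∫ v in (0 : ℝ)..t, v ^ (2 * H - 1) = t ^ (2 * H) / (2 * H) := by
    rw [integral_rpow (Or.inl (by linarith)), sub_add_cancel, zero_rpow (by positivity), sub_zero]
  have int_rem := intervalIntegrable_fouRemainder hH hθ ht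
  have int_exp : IntervalIntegrable
      (fun v => upperGamma θ (2 * H) 0 * (θ * exp (θ * v))) volume 0 t :=
    Continuous.intervalIntegrable (by fun_prop) _ _
  have int_pow : IntervalIntegrable (fun v : ℝ => v ^ (2 * H - 1)) volume 0 t :=
    intervalIntegral.intervalIntegrable_rpow' (by linarith)
  rw [← integral_exp, ← integral_pow, ← intervalIntegral.integral_const_mul,
    ← intervalIntegral.integral_const_mul, ← intervalIntegral.integral_add int_rem int_exp,
    ← intervalIntegral.integral_sub (int_rem.add int_exp) int_pow,
    ← intervalIntegral.integral_const_mul]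
  exact intervalIntegral.integral_congr_Ioo_of_le ht fun v hv => fouCov_integrand_eq hθ hv.1

theorem fouCov_eq (hH : 0 < H) (hθ : 0 < θ) (ht : 0 ≤ t) :
    fouCov H θ t = θ ^ (-(2 * H)) * H * Gamma (2 * H) +
      exp (-θ * t) * (H * (∫ v in (0 : ℝ)..t, fouRemainder H θ v) - 1 / 2 * t ^ (2 * H)) := by
  have exp_cancel : exp (-θ * t) * exp (θ * t) = 1 := by rw [← exp_add]; simp
  have half_pow : H * (t ^ (2 * H) / (2 * H)) = 1 / 2 * t ^ (2 * H) := by field_simp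
  rw [fouCov, fouCov_double_integral_eq hH hθ ht, upperGamma_zero hθ (by positivity)]
  linear_combination
    (θ ^ (-(2 * H)) * H * Gamma (2 * H)) * exp_cancel - exp (-θ * t) * half_pow

end FractionalOrnsteinUhlenbeck

theorem stmt_17_general (H θ : ℝ) (hH0 : 0 < H) (hH1 : H < 1) (hθ : 0 < θ) :
    (fun t => fouCov H θ t - θ ^ (-(2 * H)) * H * Gamma (2 * H) + 1 / 2 * t ^ (2 * H))
      =o[𝓝[>] 0] fun t => t ^ (2 * H) := by
  have remainder : (fun t => ∫ v in (0 : ℝ)..t, fouRemainder H θ v)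
      =o[𝓝[>] 0] fun t => t ^ (2 * H) := by
    simpa only [sub_add_cancel] using
      isLittleO_intervalIntegral_rpow (by linarith) (isLittleO_fouRemainder hH0 hH1 hθ)
  have remainder_part := isLittleO_exp_mul_mul (-θ) (remainder.const_mul_left H)
  have power_part :=
    (isLittleO_exp_mul_sub_one_mul (-θ) fun t => t ^ (2 * H)).const_mul_left (1 / 2)
  refine (remainder_part.sub power_part).congr' ?_ EventuallyEq.rfl
  filter_upwards [self_mem_nhdsWithin] with t ht
  rw [fouCov_eq hH0 hθ (le_of_lt ht)]
  ring

theorem stmt_17 (H θ : ℝ) (h1 : 1/2 < H) (h2 : H < 1) (hθ : 0 < θ) :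
    Tendsto (fun t : ℝ =>
      (Real.exp (-θ*t) * (θ ^ (-(2*H)) * H * Real.Gamma (2*H) +
          H * (2*H - 1) * ∫ v in (0:ℝ)..t, ∫ x in Ioi v,
            Real.exp (-θ*x + 2*θ*v) * x ^ (2*H - 2))
        - θ ^ (-(2*H)) * H * Real.Gamma (2*H) + (1/2) * t ^ (2*H)) / t ^ (2*H))
      (nhdsWithin 0 (Ioi 0)) (nhds 0) :=
  (stmt_17_general H θ (by linarith) h2 hθ).tendsto_div_nhds_zero
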